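/- arXiv:1509.05246 — 2 statements merged into one kernel-verified Lean document; each statement's English description precedes it below -/
import Mathlib

section
/- Let (X,T) be a topological dynamical system given by a continuous ℤ^d-action on a compact metric space. If (X,T) is mean equicontinuous, then it is uniformly mean equicontinuous: for every ε > 0 there exists δ > 0 such that whenever d(x,y) ≤ δ, the upper density of {i ∈ ℤ^d : d(T^i x, T^i y) > ε} is less than ε. -/
open MeasureTheory Filter Finset Metric
open scoped Classical

noncomputable section

/-- The box `{0,…,n−1}^d` inside `ℤ^d`. -/
def Fbox (d n : ℕ) : Finset (Fin d → ℤ) :=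
  Fintype.piFinset fun _ => Finset.Icc (0 : ℤ) ((n : ℤ) - 1)

/-- Upper density of a subset of `ℤ^d` along the boxes `F_n`. -/
def upperDensity (d : ℕ) (S : Set (Fin d → ℤ)) : ℝ :=
  Filter.limsup
    (fun n : ℕ => (((Fbox d n).filter (fun j => j ∈ S)).card : ℝ) / ((Fbox d n).card : ℝ))
    Filter.atTop

/-- Lower density of a subset of `ℤ^d` along the boxes `F_n`. -/
def lowerDensity (d : ℕ) (S : Set (Fin d → ℤ)) : ℝ :=
  Filter.liminf
    (fun n : ℕ => (((Fbox d n).filter (fun j => j ∈ S)).card : ℝ) / ((Fbox d n).card : ℝ))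
    Filter.atTop

variable {X : Type*}

/-- The Besicovitch pseudometric `d_b(x,y) = limsup_n (1/|F_n|) Σ_{j∈F_n} d(T^j x, T^j y)`. -/
def dB {d : ℕ} [PseudoMetricSpace X] (T : (Fin d → ℤ) → X → X) (x y : X) : ℝ :=
  Filter.limsup (fun n : ℕ =>
    (∑ j ∈ Fbox d n, dist (T j x) (T j y)) / ((Fbox d n).card : ℝ)) Filter.atTop

/-!
The Besicovitch pseudometric `d_b` satisfies the triangle inequality, and mean equicontinuity says
that the identity from `X` to `(X, d_b)` is continuous. As in the Heine–Cantor theorem, a Lebesgue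
number of a cover by balls on which `d_b` is small makes it uniformly continuous. Markov's
inequality for upper means then bounds the upper density of `{i | ε < d(T^i x, T^i y)}` by
`d_b(x, y) / ε`, so it is enough to make `d_b(x, y)` smaller than `ε²`.
-/

section UpperMean

variable {ι : Type*}

/-- The upper mean of `f` along a sequence `F` of finite sets: the limit superior of the averages
of `f` over `F n`. It specializes to `dB` and, on indicator functions, to `upperDensity`. The
average over an empty `F n` is `0`. -/
def upperMean (F : ℕ → Finset ι) (f : ι → ℝ) : ℝ :=
  limsup (fun n => (∑ i ∈ F n, f i) / #(F n)) atTop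

variable {F : ℕ → Finset ι} {f g : ι → ℝ}

lemma isBoundedUnder_ge_sum_div_card (hf : 0 ≤ f) :
    IsBoundedUnder (· ≥ ·) atTop fun n => (∑ i ∈ F n, f i) / #(F n) :=
  isBoundedUnder_of ⟨0, fun _ => div_nonneg (sum_nonneg fun i _ => hf i) (Nat.cast_nonneg _)⟩

lemma isBoundedUnder_le_sum_div_card (hf : BddAbove (Set.range f)) :
    IsBoundedUnder (· ≤ ·) atTop fun n => (∑ i ∈ F n, f i) / #(F n) := by
  obtain ⟨C, hC⟩ := hf
  refine isBoundedUnder_of ⟨max C 0, fun n => ?_⟩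
  refine div_le_of_le_mul₀ (Nat.cast_nonneg _) (le_max_right _ _) ?_
  calc ∑ i ∈ F n, f i
      ≤ #(F n) • max C 0 := sum_le_card_nsmul _ _ _ fun i _ =>
        (hC (Set.mem_range_self i)).trans (le_max_left _ _)
    _ = max C 0 * #(F n) := by rw [nsmul_eq_mul, mul_comm]

lemma upperMean_mono (hf : 0 ≤ f) (hfg : f ≤ g) (hg : BddAbove (Set.range g)) :
    upperMean F f ≤ upperMean F g := by
  refine limsup_le_limsup (.of_forall fun n => ?_)
    (isBoundedUnder_ge_sum_div_card hf).isCoboundedUnder_le (isBoundedUnder_le_sum_div_card hg)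
  exact div_le_div_of_nonneg_right (sum_le_sum fun i _ => hfg i) (Nat.cast_nonneg _)

lemma upperMean_add_le (hf : 0 ≤ f) (hg : 0 ≤ g) (hf' : BddAbove (Set.range f))
    (hg' : BddAbove (Set.range g)) :
    upperMean F (f + g) ≤ upperMean F f + upperMean F g := by
  unfold upperMean
  simp only [Pi.add_apply, sum_add_distrib, add_div]
  exact limsup_add_le (isBoundedUnder_ge_sum_div_card hf) (isBoundedUnder_le_sum_div_card hf')
    (isBoundedUnder_ge_sum_div_card hg).isCoboundedUnder_le (isBoundedUnder_le_sum_div_card hg')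

lemma upperMean_const_mul {c : ℝ} (hc : 0 ≤ c) (hf : 0 ≤ f) (hf' : BddAbove (Set.range f)) :
    upperMean F (fun i => c * f i) = c * upperMean F f := by
  unfold upperMean
  simp only [← mul_sum, mul_div_assoc]
  exact ((monotone_mul_left_of_nonneg hc).map_limsup_of_continuousAt _
    (continuous_const_mul c).continuousAt (isBoundedUnder_le_sum_div_card hf')
    (isBoundedUnder_ge_sum_div_card hf).isCoboundedUnder_le).symm

lemma upperMean_indicator_lt_le_div {c : ℝ} (hc : 0 < c) (hf : 0 ≤ f)
    (hf' : BddAbove (Set.range f)) :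
    upperMean F ({i | c < f i}.indicator 1) ≤ upperMean F f / c := by
  set χ : ι → ℝ := {i | c < f i}.indicator 1
  have hχ : 0 ≤ χ := Set.indicator_nonneg fun _ _ => zero_le_one
  have hχ' : BddAbove (Set.range χ) :=
    ⟨1, Set.forall_mem_range.2 <| Set.indicator_le_self' fun _ _ => zero_le_one⟩
  have hχf : ∀ i, c * χ i ≤ f i := fun i => by
    by_cases hi : c < f i
    · simpa [χ, hi] using hi.le
    · simpa [χ, hi] using hf i
  rw [le_div_iff₀' hc, ← upperMean_const_mul hc.le hχ hχ']
  exact upperMean_mono (fun i => mul_nonneg hc.le (hχ i)) hχf hf'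

end UpperMean

lemma upperDensity_eq_upperMean_indicator (d : ℕ) (S : Set (Fin d → ℤ)) :
    upperDensity d S = upperMean (Fbox d) (S.indicator 1) := by
  simp only [upperDensity, upperMean, Set.indicator_apply, Pi.one_apply, sum_boole]

lemma dB_eq_upperMean_dist {d : ℕ} [PseudoMetricSpace X] (T : (Fin d → ℤ) → X → X) (x y : X) :
    dB T x y = upperMean (Fbox d) fun i => dist (T i x) (T i y) :=
  rfl

lemma bddAbove_range_dist {ι Y : Type*} [PseudoMetricSpace Y] [BoundedSpace Y] (u v : ι → Y) :
    BddAbove (Set.range fun i => dist (u i) (v i)) :=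
  ⟨diam Set.univ, Set.forall_mem_range.2 fun _ =>
    dist_le_diam_of_mem (Bornology.IsBounded.all _) (Set.mem_univ _) (Set.mem_univ _)⟩

lemma upperMean_dist_triangle_left {ι Y : Type*} [PseudoMetricSpace Y] [BoundedSpace Y]
    (F : ℕ → Finset ι) (u v w : ι → Y) :
    upperMean F (fun i => dist (u i) (v i)) ≤
      upperMean F (fun i => dist (w i) (u i)) + upperMean F (fun i => dist (w i) (v i)) := by
  have hu := bddAbove_range_dist w u
  have hv := bddAbove_range_dist w v
  calc upperMean F (fun i => dist (u i) (v i))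
      ≤ upperMean F ((fun i => dist (w i) (u i)) + fun i => dist (w i) (v i)) :=
        upperMean_mono (fun _ => dist_nonneg) (fun _ => dist_triangle_left _ _ _)
          (hu.range_add hv)
    _ ≤ _ := upperMean_add_le (fun _ => dist_nonneg) (fun _ => dist_nonneg) hu hv

lemma exists_forall_dist_le_lt_of_pointwise [PseudoMetricSpace X] [CompactSpace X]
    {ρ : X → X → ℝ} (triangle_left : ∀ x y z, ρ x y ≤ ρ z x + ρ z y)
    (pointwise : ∀ x, ∀ ε > 0, ∃ δ > 0, ∀ y, dist x y ≤ δ → ρ x y < ε) {ε : ℝ} (hε : 0 < ε) :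
    ∃ δ > 0, ∀ x y, dist x y ≤ δ → ρ x y < ε := by
  choose δ hδ_pos hδ using fun z => pointwise z (ε / 2) (half_pos hε)
  obtain ⟨r, hr, hball⟩ := lebesgue_number_lemma_of_metric (c := fun z => ball z (δ z))
    isCompact_univ (fun _ => isOpen_ball)
    fun z _ => Set.mem_iUnion.2 ⟨z, mem_ball_self (hδ_pos z)⟩
  refine ⟨r / 2, half_pos hr, fun x y hxy => ?_⟩
  obtain ⟨z, hz⟩ := hball x (Set.mem_univ x)
  have hzx : ρ z x < ε / 2 := hδ z x (mem_ball'.1 (hz (mem_ball_self hr))).le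
  have hzy : ρ z y < ε / 2 :=
    hδ z y (mem_ball'.1 (hz (mem_ball'.2 (hxy.trans_lt (half_lt_self hr))))).le
  linarith [triangle_left x y z]

theorem stmt8_general {ι Y : Type*} [PseudoMetricSpace X] [CompactSpace X]
    [PseudoMetricSpace Y] [BoundedSpace Y] (F : ℕ → Finset ι) (T : ι → X → Y)
    (hme : ∀ x, ∀ ε > 0, ∃ δ > 0, ∀ y, dist x y ≤ δ →
      upperMean F (fun i => dist (T i x) (T i y)) < ε) {ε : ℝ} (hε : 0 < ε) :
    ∃ δ > 0, ∀ x y, dist x y ≤ δ →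
      upperMean F ({i | ε < dist (T i x) (T i y)}.indicator 1) < ε := by
  obtain ⟨δ, hδ, hT⟩ := exists_forall_dist_le_lt_of_pointwise
    (fun x y z => upperMean_dist_triangle_left F (T · x) (T · y) (T · z)) hme (mul_pos hε hε)
  refine ⟨δ, hδ, fun x y hxy => ?_⟩
  calc upperMean F ({i | ε < dist (T i x) (T i y)}.indicator 1)
      ≤ upperMean F (fun i => dist (T i x) (T i y)) / ε :=
        upperMean_indicator_lt_le_div hε (fun _ => dist_nonneg) (bddAbove_range_dist _ _)
    _ < ε := (div_lt_iff₀ hε).2 (hT x y hxy)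

/-- a mean equicontinuous TDS is uniformly mean equicontinuous. -/
theorem stmt8 {d : ℕ}
    [MetricSpace X] [CompactSpace X]
    (T : (Fin d → ℤ) → X → X)
    (hTc : ∀ j, Continuous (T j))
    (hTadd : ∀ i j, T (i + j) = T i ∘ T j)
    (hme : ∀ x : X, ∀ ε : ℝ, 0 < ε → ∃ δ : ℝ, 0 < δ ∧
      ∀ y : X, dist x y ≤ δ → dB T x y < ε) :
    ∀ ε : ℝ, 0 < ε → ∃ δ : ℝ, 0 < δ ∧
      ∀ x y : X, dist x y ≤ δ →
        upperDensity d {i : Fin d → ℤ | ε < dist (T i x) (T i y)} < ε := by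
  simp only [dB_eq_upperMean_dist] at hme
  simpa only [upperDensity_eq_upperMean_indicator] using fun ε hε => stmt8_general (Fbox d) T hme hε
end
end

section
/- Let (X,T) be a transitive topological dynamical system given by a continuous ℕ^d-action on a compact metric space. If (X,T) is weakly almost periodic (every f ∈ C(X) is weakly almost periodic), then (X,T) is mean equicontinuous. -/
open MeasureTheory Filter Finset Metric
open scoped Classical

noncomputable section

/-- The box `{0,…,n−1}^d` inside `ℕ^d`. -/
def FboxN (d n : ℕ) : Finset (Fin d → ℕ) :=
  Fintype.piFinset fun _ => Finset.range n

variable {X : Type*}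

/-- The Besicovitch pseudometric `d_b` for an `ℕ^d`-action. -/
def dBN {d : ℕ} [PseudoMetricSpace X] (T : (Fin d → ℕ) → X → X) (x y : X) : ℝ :=
  Filter.limsup (fun n : ℕ =>
    (∑ j ∈ FboxN d n, dist (T j x) (T j y)) / ((FboxN d n).card : ℝ)) Filter.atTop

/-!
Weak almost periodicity forces the Ellis semigroup `E` of the action to consist of continuous maps,
so `E` is a compact commutative semigroup and has an idempotent `e` for which `e ∘ E` is a compact
group. By Baire category this group is equicontinuous, so the action is equicontinuous on `e X`.
On the other hand `y ↦ dist y (e y)` vanishes on `e X`, and composing it with `e` stays in the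
weak closure of its orbit. By Mazur's theorem Følner averages along an orbit do not distinguish a
function from the elements of that weak closure, so `T j x` and `T j (e x)` are close on average.
-/

open Topology
open scoped BigOperators

section Namioka

variable {M Y : Type*} [TopologicalSpace M] [PseudoMetricSpace X] [CompactSpace X]
  [PseudoMetricSpace Y] {f : M → X → Y}

lemma eventually_forall_dist_le_of_mem_interior {δ ε : ℝ} (hδ : 0 < δ) (hε : 0 < ε)
    (hf : ∀ x, Continuous fun m => f m x) {m₀ : M}
    (hm₀ : m₀ ∈ interior {m | ∀ x y, dist x y < δ → dist (f m x) (f m y) ≤ ε}) :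
    ∀ᶠ m in 𝓝 m₀, ∀ x, dist (f m₀ x) (f m x) ≤ 3 * ε := by
  obtain ⟨t, -, htfin, ht⟩ := finite_cover_balls_of_compact (isCompact_univ (X := X)) hδ
  have near_on_net : ∀ᶠ m in 𝓝 m₀, ∀ y ∈ t, dist (f m₀ y) (f m y) < ε :=
    (eventually_all_finite htfin).2 fun y _ =>
      (continuous_const.dist (hf y)).continuousAt.eventually_lt_const (by simpa using hε)
  filter_upwards [near_on_net, mem_interior_iff_mem_nhds.1 hm₀] with m hm hmδ x
  obtain ⟨y, hyt, hxy⟩ := Set.mem_iUnion₂.1 (ht (Set.mem_univ x))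
  calc dist (f m₀ x) (f m x)
      ≤ dist (f m₀ x) (f m₀ y) + dist (f m₀ y) (f m y) + dist (f m y) (f m x) :=
        dist_triangle4 ..
    _ ≤ ε + ε + ε := by
        gcongr
        · exact interior_subset hm₀ x y hxy
        · exact (hm y hyt).le
        · exact hmδ y x (mem_ball'.1 hxy)
    _ = 3 * ε := by ring

lemma dense_iUnion_interior_modulus [BaireSpace M] (hf : ∀ x, Continuous fun m => f m x)
    (hf' : ∀ m, Continuous (f m)) {ε : ℝ} (hε : 0 < ε) :
    Dense (⋃ k : ℕ, interior
      {m | ∀ x y, dist x y < 1 / ((k : ℝ) + 1) → dist (f m x) (f m y) ≤ ε}) := by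
  refine dense_iUnion_interior_of_closed (fun k => ?_) (Set.eq_univ_of_forall fun m => ?_)
  · simp only [Set.ofPred_forall]
    exact isClosed_iInter fun x => isClosed_iInter fun y => isClosed_iInter fun _ =>
      isClosed_le ((hf x).dist (hf y)) continuous_const
  · obtain ⟨δ, hδ, hmδ⟩ := Metric.uniformContinuous_iff.1
      (CompactSpace.uniformContinuous_of_continuous (hf' m)) ε hε
    obtain ⟨k, hk⟩ := exists_nat_one_div_lt hδ
    exact Set.mem_iUnion.2 ⟨k, fun x y hxy => (hmδ (hxy.trans hk)).le⟩

/-- Namioka's theorem for a compact metric second factor. -/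
lemma dense_setOf_equicontinuousAt [BaireSpace M] (hf : ∀ x, Continuous fun m => f m x)
    (hf' : ∀ m, Continuous (f m)) : Dense {m | EquicontinuousAt (fun x m => f m x) m} := by
  have hpos (n : ℕ) : (0 : ℝ) < 1 / ((n : ℝ) + 1) := Nat.one_div_pos_of_nat
  refine (dense_iInter_of_isOpen_nat (fun _ => isOpen_iUnion fun _ => isOpen_interior)
    fun n => dense_iUnion_interior_modulus hf hf' (hpos n)).mono fun m hm => ?_
  rw [Set.mem_ofPred_eq, Metric.equicontinuousAt_iff_right]
  intro ε hε
  obtain ⟨n, hn⟩ := exists_nat_one_div_lt (show 0 < ε / 3 by positivity)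
  obtain ⟨k, hk⟩ := Set.mem_iUnion.1 (Set.mem_iInter.1 hm n)
  filter_upwards [eventually_forall_dist_le_of_mem_interior (hpos k) (hpos n) hf hk] with m' hm' x
  exact (hm' x).trans_lt (by linarith)

end Namioka

lemma equicontinuous_of_swap {K Y : Type*} [TopologicalSpace K] [CompactSpace K]
    [TopologicalSpace X] [UniformSpace Y] {f : K → X → Y} (hf : ∀ k, Continuous (f k))
    (hf' : Equicontinuous fun x k => f k x) : Equicontinuous f := by
  have jointly_continuous : Continuous (Function.uncurry fun x k => f k x) := by
    rw [continuous_iff_continuousAt]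
    rintro ⟨x₀, k₀⟩
    refine Uniform.tendsto_nhds_right.2 fun V hV => ?_
    obtain ⟨W, hW, hWV⟩ := comp_mem_uniformity_sets hV
    have in_x : ∀ᶠ x in 𝓝 x₀, (f k₀ x₀, f k₀ x) ∈ W :=
      Uniform.tendsto_nhds_right.1 ((hf k₀).tendsto x₀) hW
    have in_k : ∀ᶠ k in 𝓝 k₀, ∀ x, (f k₀ x, f k x) ∈ W := hf' k₀ W hW
    rw [nhds_prod_eq]
    exact (in_x.prod_mk in_k).mono fun z hz => hWV ⟨f k₀ z.1, hz.1, hz.2 z.1⟩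
  intro x V hV
  obtain ⟨U, hU, hUV⟩ := isCompact_univ.mem_uniformity_of_prod
    (s := Set.univ) (q := x) jointly_continuous.continuousOn (Set.mem_univ x)
    (symm_le_uniformity hV)
  rw [nhdsWithin_univ] at hU
  filter_upwards [hU] with y hy k
  exact hUV y hy k (Set.mem_univ k)

lemma equicontinuousAt_comp_comp {ι A B Y Z : Type*} [TopologicalSpace A] [TopologicalSpace B]
    [UniformSpace Y] [UniformSpace Z] {F : ι → B → Y} {φ : A → B} {h : Y → Z} {a : A}
    (hF : EquicontinuousAt F (φ a)) (hφ : ContinuousAt φ a) (hh : UniformContinuous h) :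
    EquicontinuousAt (fun i a => h (F i (φ a))) a :=
  fun _ hV => hφ.eventually (hF _ (hh hV))

lemma continuous_comp_left {Y Z ι : Type*} [TopologicalSpace Y] [TopologicalSpace Z] {g : Y → Z}
    (hg : Continuous g) : Continuous fun p : ι → Y => g ∘ p :=
  continuous_pi fun i => hg.comp (continuous_apply i)

lemma continuous_comp_right {Y ι κ : Type*} [TopologicalSpace Y] (g : κ → ι) :
    Continuous fun p : ι → Y => p ∘ g :=
  continuous_pi fun i => continuous_apply (g i)

/-- A nonempty set of continuous self-maps that is compact for pointwise convergence and is a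
commutative semigroup under composition. -/
structure IsCompactCommSemigroup [TopologicalSpace X] (S : Set (X → X)) : Prop where
  nonempty : S.Nonempty
  isCompact : IsCompact S
  continuous : ∀ p ∈ S, Continuous p
  comp_mem : ∀ p ∈ S, ∀ q ∈ S, p ∘ q ∈ S
  comp_comm : ∀ p ∈ S, ∀ q ∈ S, p ∘ q = q ∘ p

/-- A compact commutative semigroup of continuous self-maps that is a group with unit `e`. The unit
is an idempotent map, in general not the identity. -/
structure IsCompactCommGroup [TopologicalSpace X] (K : Set (X → X)) (e : X → X) : Prop
    extends IsCompactCommSemigroup K where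
  one_mem : e ∈ K
  one_comp : ∀ p ∈ K, e ∘ p = p
  exists_inv : ∀ p ∈ K, ∃ q ∈ K, q ∘ p = e

namespace IsCompactCommSemigroup

variable [TopologicalSpace X] {S : Set (X → X)}

lemma exists_forall_exists_comp_eq [T2Space X] (hS : IsCompactCommSemigroup S) :
    ∃ k ∈ S, ∀ p ∈ S, ∃ q ∈ S, p ∘ q = k := by
  have : Nonempty S := hS.nonempty.to_subtype
  have isCompact_ideal (p : S) : IsCompact ((p.1 ∘ ·) '' S) :=
    hS.isCompact.image (continuous_comp_left (hS.continuous p p.2))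
  have directed_ideals : Directed (· ⊇ ·) fun p : S => (p.1 ∘ ·) '' S := by
    rintro ⟨p, hp⟩ ⟨q, hq⟩
    refine ⟨⟨p ∘ q, hS.comp_mem p hp q hq⟩, ?_, ?_⟩
    · rintro _ ⟨r, hr, rfl⟩
      exact ⟨q ∘ r, hS.comp_mem q hq r hr, rfl⟩
    · rintro _ ⟨r, hr, rfl⟩
      exact ⟨p ∘ r, hS.comp_mem p hp r hr, congrArg (· ∘ r) (hS.comp_comm q hq p hp)⟩
  obtain ⟨k, hk⟩ := IsCompact.nonempty_iInter_of_directed_nonempty_isCompact_isClosed _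
    directed_ideals (fun _ => hS.nonempty.image _) isCompact_ideal
    fun p => (isCompact_ideal p).isClosed
  have k_mem_ideal : ∀ p ∈ S, ∃ q ∈ S, p ∘ q = k := fun p hp => Set.mem_iInter.1 hk ⟨p, hp⟩
  obtain ⟨p, hp⟩ := hS.nonempty
  obtain ⟨q, hq, rfl⟩ := k_mem_ideal p hp
  exact ⟨p ∘ q, hS.comp_mem p hp q hq, k_mem_ideal⟩

lemma exists_minimal_idempotent [T2Space X] (hS : IsCompactCommSemigroup S) :
    ∃ e ∈ S, e ∘ e = e ∧ ∀ p ∈ S, ∃ q ∈ S, p ∘ q = e := by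
  obtain ⟨k, hk, k_mem_ideal⟩ := hS.exists_forall_exists_comp_eq
  obtain ⟨s, hs, hks⟩ := k_mem_ideal (k ∘ k) (hS.comp_mem k hk k hk)
  refine ⟨k ∘ s, hS.comp_mem k hk s hs, ?_, fun p hp => ?_⟩
  · calc (k ∘ s) ∘ (k ∘ s) = k ∘ (s ∘ k) ∘ s := rfl
      _ = ((k ∘ k) ∘ s) ∘ s := by rw [hS.comp_comm s hs k hk]; rfl
      _ = k ∘ s := by rw [hks]
  · obtain ⟨q, hq, rfl⟩ := k_mem_ideal p hp
    exact ⟨q ∘ s, hS.comp_mem q hq s hs, rfl⟩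

lemma isCompactCommGroup_image (hS : IsCompactCommSemigroup S) {e : X → X} (he : e ∈ S)
    (hee : e ∘ e = e) (hmin : ∀ p ∈ S, ∃ q ∈ S, p ∘ q = e) :
    IsCompactCommGroup ((e ∘ ·) '' S) e := by
  have mem_S : ∀ p ∈ (e ∘ ·) '' S, p ∈ S := by
    rintro _ ⟨p, hp, rfl⟩
    exact hS.comp_mem e he p hp
  refine
    { nonempty := hS.nonempty.image _
      isCompact := hS.isCompact.image (continuous_comp_left (hS.continuous e he))
      continuous := fun p hp => hS.continuous p (mem_S p hp)
      comp_mem := ?_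
      comp_comm := fun p hp q hq => hS.comp_comm p (mem_S p hp) q (mem_S q hq)
      one_mem := ⟨e, he, hee⟩
      one_comp := ?_
      exists_inv := fun p hp => ?_ }
  · rintro _ ⟨p, hp, rfl⟩ q hq
    exact ⟨p ∘ q, hS.comp_mem p hp q (mem_S q hq), rfl⟩
  · rintro _ ⟨p, -, rfl⟩
    exact congrArg (· ∘ p) hee
  · obtain ⟨q, hq, hpq⟩ := hmin p (mem_S p hp)
    refine ⟨e ∘ q, ⟨q, hq, rfl⟩, ?_⟩
    calc e ∘ q ∘ p = e ∘ p ∘ q := by rw [hS.comp_comm q hq p (mem_S p hp)]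
      _ = e := by rw [hpq, hee]

end IsCompactCommSemigroup

namespace IsCompactCommGroup

variable {K : Set (X → X)} {e : X → X}

lemma exists_comp_eq [TopologicalSpace X] (hK : IsCompactCommGroup K e) {p q : X → X}
    (hp : p ∈ K) (hq : q ∈ K) : ∃ g ∈ K, g ∘ p = q := by
  obtain ⟨p', hp', hp'p⟩ := hK.exists_inv p hp
  refine ⟨q ∘ p', hK.comp_mem q hq p' hp', ?_⟩
  calc q ∘ p' ∘ p = q ∘ e := by rw [hp'p]
    _ = e ∘ q := hK.comp_comm q hq e hK.one_mem
    _ = q := hK.one_comp q hq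

lemma equicontinuousAt_eval_of_equicontinuousAt [UniformSpace X] [CompactSpace X]
    (hK : IsCompactCommGroup K e) {p₀ : K}
    (hp₀ : EquicontinuousAt (fun x (p : K) => p.1 x) p₀) (p : K) :
    EquicontinuousAt (fun x (p : K) => p.1 x) p := by
  obtain ⟨g, hg, hgp⟩ := hK.exists_comp_eq p.2 p₀.2
  obtain ⟨h, hh, hhg⟩ := hK.exists_inv g hg
  have h_unif : UniformContinuous h :=
    CompactSpace.uniformContinuous_of_continuous (hK.continuous h hh)
  let translate : K → K := fun q => ⟨g ∘ q, hK.comp_mem g hg q q.2⟩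
  have translate_continuous : Continuous translate :=
    ((continuous_comp_left (hK.continuous g hg)).comp continuous_subtype_val).subtype_mk _
  have translate_p : translate p = p₀ := Subtype.ext hgp
  have comp_translate (q : K) : h ∘ (translate q).1 = q :=
    calc h ∘ g ∘ q.1 = e ∘ q.1 := by rw [← hhg]; rfl
      _ = q.1 := hK.one_comp q q.2
  have family_eq : (fun x (q : K) => q.1 x) = fun x q => h ((translate q).1 x) :=
    funext₂ fun x q => congrFun (comp_translate q).symm x
  rw [family_eq]
  exact equicontinuousAt_comp_comp (translate_p ▸ hp₀) translate_continuous.continuousAt h_unif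

lemma equicontinuous [PseudoMetricSpace X] [CompactSpace X] (hK : IsCompactCommGroup K e) :
    Equicontinuous fun (p : K) x => p.1 x := by
  have : CompactSpace K := isCompact_iff_compactSpace.1 hK.isCompact
  have : Nonempty K := hK.nonempty.to_subtype
  have eval_continuous (x : X) : Continuous fun p : K => p.1 x :=
    (continuous_apply x).comp continuous_subtype_val
  have map_continuous (p : K) : Continuous p.1 := hK.continuous p p.2
  obtain ⟨p₀, hp₀⟩ := (dense_setOf_equicontinuousAt eval_continuous map_continuous).nonempty
  exact equicontinuous_of_swap map_continuous (hK.equicontinuousAt_eval_of_equicontinuousAt hp₀)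

end IsCompactCommGroup

section WeaklyAlmostPeriodic

/-- Weak almost periodicity of the system generated by the maps `T j`: every orbit
`{f ∘ T j}` in `C(X, 𝕜)` is relatively compact for the weak topology. -/
def IsWeaklyAlmostPeriodic (𝕜 : Type*) [RCLike 𝕜] {ι : Type*} [TopologicalSpace X] [CompactSpace X]
    (T : ι → C(X, X)) : Prop :=
  ∀ f : C(X, 𝕜), IsCompact (closure (Set.range fun j => toWeakSpace 𝕜 C(X, 𝕜) (f.comp (T j))))

/-- The Ellis (enveloping) semigroup of the maps `T j`: their closure for pointwise convergence. -/
def ellisSemigroup {ι : Type*} [TopologicalSpace X] (T : ι → C(X, X)) : Set (X → X) :=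
  closure (Set.range fun j => ⇑(T j))

lemma continuous_eval_toWeakSpace_symm (𝕜 : Type*) [RCLike 𝕜] [TopologicalSpace X]
    [CompactSpace X] :
    Continuous fun (w : WeakSpace 𝕜 C(X, 𝕜)) x => (toWeakSpace 𝕜 C(X, 𝕜)).symm w x :=
  continuous_pi fun x =>
    WeakBilin.eval_continuous (topDualPairing 𝕜 C(X, 𝕜)).flip (ContinuousMap.evalCLM 𝕜 x)

variable {𝕜 : Type*} [RCLike 𝕜] {ι : Type*}

lemma IsWeaklyAlmostPeriodic.exists_mem_weak_closure [TopologicalSpace X] [CompactSpace X]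
    {T : ι → C(X, X)} (hT : IsWeaklyAlmostPeriodic 𝕜 T) {p : X → X} (hp : p ∈ ellisSemigroup T)
    (f : C(X, 𝕜)) :
    ∃ h : C(X, 𝕜), ⇑h = f ∘ p ∧ toWeakSpace 𝕜 C(X, 𝕜) h ∈
      closure (Set.range fun j => toWeakSpace 𝕜 C(X, 𝕜) (f.comp (T j))) := by
  set C := closure (Set.range fun j => toWeakSpace 𝕜 C(X, 𝕜) (f.comp (T j)))
  let eval : WeakSpace 𝕜 C(X, 𝕜) → X → 𝕜 := fun w => (toWeakSpace 𝕜 C(X, 𝕜)).symm w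
  have isClosed_eval_image : IsClosed (eval '' C) :=
    ((hT f).image (continuous_eval_toWeakSpace_symm 𝕜)).isClosed
  have comp_mem_image : ∀ q ∈ ellisSemigroup T, f ∘ q ∈ eval '' C := by
    refine closure_minimal ?_ (isClosed_eval_image.preimage (continuous_comp_left f.continuous))
    rintro _ ⟨j, rfl⟩
    exact ⟨_, subset_closure ⟨j, rfl⟩, rfl⟩
  obtain ⟨w, hw, hwp⟩ := comp_mem_image p hp
  exact ⟨(toWeakSpace 𝕜 C(X, 𝕜)).symm w, hwp, by simpa using hw⟩

lemma IsWeaklyAlmostPeriodic.continuous_of_mem_ellisSemigroup [PseudoMetricSpace X] [CompactSpace X]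
    {T : ι → C(X, X)} (hT : IsWeaklyAlmostPeriodic 𝕜 T) {p : X → X} (hp : p ∈ ellisSemigroup T) :
    Continuous p := by
  refine continuous_iff_continuousAt.2 fun x => tendsto_iff_dist_tendsto_zero.2 ?_
  obtain ⟨h, hh, -⟩ :=
    hT.exists_mem_weak_closure hp ⟨fun y => ((dist y (p x) : ℝ) : 𝕜), by fun_prop⟩
  have h_re (y : X) : RCLike.re (h y) = dist (p y) (p x) := by simp [hh]
  simpa only [Function.comp_def, h_re, dist_self] using
    (RCLike.continuous_re.comp h.continuous).tendsto x

section EllisSemigroup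

variable {G : Type*} [AddCommSemigroup G] [TopologicalSpace X] {T : G → C(X, X)}

lemma comp_comm_of_mem_ellisSemigroup [T2Space X] (hT : ∀ i j, T (i + j) = (T i).comp (T j))
    {p : X → X} (hp : p ∈ ellisSemigroup T) (j : G) : p ∘ T j = T j ∘ p := by
  refine closure_minimal ?_ (isClosed_eq (continuous_comp_right (T j))
    (continuous_comp_left (T j).continuous)) hp
  rintro _ ⟨i, rfl⟩
  simp only [Set.mem_ofPred_eq, ← ContinuousMap.coe_comp, ← hT, add_comm]

lemma comp_mem_ellisSemigroup (hT : ∀ i j, T (i + j) = (T i).comp (T j))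
    {p : X → X} (hp : p ∈ ellisSemigroup T) (j : G) :
    p ∘ T j ∈ ellisSemigroup T := by
  refine map_mem_closure (f := (· ∘ T j)) (continuous_comp_right (T j)) hp ?_
  rintro _ ⟨i, rfl⟩
  exact ⟨i + j, by simp [hT]⟩

lemma isCompactCommSemigroup_ellisSemigroup [T2Space X] [CompactSpace X] [Nonempty G]
    (hT : ∀ i j, T (i + j) = (T i).comp (T j)) (hc : ∀ p ∈ ellisSemigroup T, Continuous p) :
    IsCompactCommSemigroup (ellisSemigroup T) where
  nonempty := (Set.range_nonempty _).closure
  isCompact := isClosed_closure.isCompact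
  continuous := hc
  comp_mem p hp q hq := by
    refine closure_minimal ?_
      (isClosed_closure.preimage (continuous_comp_left (hc p hp))) hq
    rintro _ ⟨j, rfl⟩
    exact comp_mem_ellisSemigroup hT hp j
  comp_comm p hp q hq := by
    refine closure_minimal ?_ (isClosed_eq (continuous_comp_left (hc p hp))
      (continuous_comp_right p)) hq
    rintro _ ⟨j, rfl⟩
    exact comp_comm_of_mem_ellisSemigroup hT hp j

end EllisSemigroup

end WeaklyAlmostPeriodic

section Folner

variable {ι G : Type*} [Add G] [IsLeftCancelAdd G] [DecidableEq G]

/-- A (left) Følner family of finite subsets of `G` along a filter, for a left-cancellative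
addition. Since `g + F i` and `F i` have the same cardinality, it suffices to control one half of
their symmetric difference. -/
structure IsFolner (l : Filter ι) (F : ι → Finset G) : Prop where
  eventually_nonempty : ∀ᶠ i in l, (F i).Nonempty
  tendsto_card_sdiff : ∀ g, Tendsto
    (fun i => (((F i).map (addLeftEmbedding g) \ F i).card : ℝ) / (F i).card) l (𝓝 0)

variable {𝕜 : Type*} [RCLike 𝕜]

lemma norm_expect_add_left_sub_expect_le {a : G → 𝕜} {C : ℝ} (ha : ∀ j, ‖a j‖ ≤ C) (s : Finset G)
    (g : G) :
    ‖𝔼 j ∈ s, a (g + j) - 𝔼 j ∈ s, a j‖ ≤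
      2 * C * (((s.map (addLeftEmbedding g) \ s).card : ℝ) / s.card) := by
  set t := s.map (addLeftEmbedding g) with ht
  have card_eq : (s \ t).card = (t \ s).card := card_sdiff_comm (by simp [ht])
  have norm_sum_le (r : Finset G) : ‖∑ j ∈ r, a j‖ ≤ r.card * C := by
    simpa using norm_sum_le_of_le r fun j _ => ha j
  have norm_sub_le : ‖∑ j ∈ t, a j - ∑ j ∈ s, a j‖ ≤ 2 * C * (t \ s).card :=
    calc ‖∑ j ∈ t, a j - ∑ j ∈ s, a j‖
        = ‖∑ j ∈ t \ s, a j - ∑ j ∈ s \ t, a j‖ := by rw [sum_sdiff_sub_sum_sdiff]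
      _ ≤ (t \ s).card * C + (s \ t).card * C :=
          (norm_sub_le _ _).trans (add_le_add (norm_sum_le _) (norm_sum_le _))
      _ = 2 * C * (t \ s).card := by rw [card_eq]; ring
  have sum_translate : ∑ j ∈ s, a (g + j) = ∑ j ∈ t, a j := by simp [ht]
  rw [expect_eq_sum_div_card, expect_eq_sum_div_card, sum_translate, ← sub_div, norm_div,
    RCLike.norm_natCast, ← mul_div_assoc]
  gcongr

lemma IsFolner.tendsto_expect_add_left_sub_expect {l : Filter ι} {F : ι → Finset G}
    (hF : IsFolner l F) {a : G → 𝕜} {C : ℝ} (ha : ∀ j, ‖a j‖ ≤ C) (g : G) :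
    Tendsto (fun i => 𝔼 j ∈ F i, a (g + j) - 𝔼 j ∈ F i, a j) l (𝓝 0) :=
  squeeze_zero_norm (fun i => norm_expect_add_left_sub_expect_le ha (F i) g)
    (by simpa using (hF.tendsto_card_sdiff g).const_mul (2 * C))

end Folner

section MeanZero

variable {ι G 𝕜 : Type*} [RCLike 𝕜] [TopologicalSpace X] [CompactSpace X]

lemma norm_expect_apply_le (s : Finset G) (a : G → X) (f : C(X, 𝕜)) :
    ‖𝔼 j ∈ s, f (a j)‖ ≤ ‖f‖ := by
  rcases s.eq_empty_or_nonempty with rfl | hs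
  · simp
  · exact (RCLike.norm_expect_le (K := 𝕜)).trans (expect_le hs fun j _ => f.norm_coe_le_norm (a j))

lemma isClosed_toWeakSpace_image {E : Type*} [AddCommGroup E] [Module 𝕜 E] [Module ℝ E]
    [IsScalarTower ℝ 𝕜 E] [TopologicalSpace E] [IsTopologicalAddGroup E] [ContinuousSMul 𝕜 E]
    [LocallyConvexSpace ℝ E] {s : Set E} (hs : IsClosed s) (hconv : Convex ℝ s) :
    IsClosed (toWeakSpace 𝕜 E '' s) := by
  rw [← hs.closure_eq, hconv.toWeakSpace_closure 𝕜]
  exact isClosed_closure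

/-- The continuous functions whose averages over the sets `F i`, sampled at the points `a j`,
tend to zero along `l`. -/
def meanZero (𝕜 : Type*) [RCLike 𝕜] (l : Filter ι) (F : ι → Finset G) (a : G → X) :
    Submodule 𝕜 C(X, 𝕜) where
  carrier := {f | Tendsto (fun i => 𝔼 j ∈ F i, f (a j)) l (𝓝 0)}
  zero_mem' := by simp [tendsto_const_nhds]
  add_mem' hf hg := by simpa [expect_add_distrib] using Tendsto.add hf hg
  smul_mem' c f hf := by
    simpa [← mul_expect] using Tendsto.const_mul c hf

lemma isClosed_meanZero (l : Filter ι) (F : ι → Finset G) (a : G → X) :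
    IsClosed (meanZero 𝕜 l F a : Set C(X, 𝕜)) := by
  refine isClosed_of_closure_subset fun f hf => Metric.tendsto_nhds.2 fun ε hε => ?_
  obtain ⟨g, hg, hfg⟩ := Metric.mem_closure_iff.1 hf (ε / 2) (half_pos hε)
  filter_upwards [Metric.tendsto_nhds.1 hg (ε / 2) (half_pos hε)] with i hi
  have avg_sub : 𝔼 j ∈ F i, f (a j) - 𝔼 j ∈ F i, g (a j) = 𝔼 j ∈ F i, (f - g) (a j) := by
    simp [expect_sub_distrib]
  calc dist (𝔼 j ∈ F i, f (a j)) 0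
      ≤ dist (𝔼 j ∈ F i, f (a j)) (𝔼 j ∈ F i, g (a j)) + dist (𝔼 j ∈ F i, g (a j)) 0 :=
        dist_triangle ..
    _ ≤ dist f g + dist (𝔼 j ∈ F i, g (a j)) 0 := by
        gcongr
        rw [dist_eq_norm, dist_eq_norm, avg_sub]
        exact norm_expect_apply_le (F i) a (f - g)
    _ < ε / 2 + ε / 2 := add_lt_add hfg hi
    _ = ε := add_halves ε

variable {T : G → C(X, X)}

lemma IsFolner.comp_sub_self_mem_meanZero [Add G] [IsLeftCancelAdd G] [DecidableEq G]
    {l : Filter ι} {F : ι → Finset G} (hF : IsFolner l F)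
    (hT : ∀ i j, T (i + j) = (T i).comp (T j)) (f : C(X, 𝕜)) (g : G) (x : X) :
    f.comp (T g) - f ∈ meanZero 𝕜 l F (fun j => T j x) := by
  have := hF.tendsto_expect_add_left_sub_expect (fun j => f.norm_coe_le_norm (T j x)) g
  simpa [meanZero, hT, expect_sub_distrib] using this

lemma IsFolner.sub_mem_meanZero_of_mem_weak_closure [Add G] [IsLeftCancelAdd G]
    [DecidableEq G] {l : Filter ι} {F : ι → Finset G} (hF : IsFolner l F)
    (hT : ∀ i j, T (i + j) = (T i).comp (T j)) {f h : C(X, 𝕜)}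
    (hh : toWeakSpace 𝕜 C(X, 𝕜) h ∈
      closure (Set.range fun j => toWeakSpace 𝕜 C(X, 𝕜) (f.comp (T j)))) (x : X) :
    h - f ∈ meanZero 𝕜 l F (fun j => T j x) := by
  set N := meanZero 𝕜 l F (fun j => T j x)
  have isClosed_coset : IsClosed {g | g + -f ∈ N} :=
    (isClosed_meanZero l F _).preimage (continuous_add_const (-f))
  have convex_coset : Convex ℝ {g | g + -f ∈ N} :=
    (N.restrictScalars ℝ).convex.translate_preimage_left (-f)
  have orbit_subset : (Set.range fun j => toWeakSpace 𝕜 C(X, 𝕜) (f.comp (T j))) ⊆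
      toWeakSpace 𝕜 C(X, 𝕜) '' {g | g + -f ∈ N} := by
    rintro _ ⟨g, rfl⟩
    exact ⟨_, by simpa [sub_eq_add_neg] using hF.comp_sub_self_mem_meanZero hT f g x, rfl⟩
  obtain ⟨h', hh', h'_eq⟩ := closure_minimal orbit_subset
    (isClosed_toWeakSpace_image isClosed_coset convex_coset) hh
  rw [← (toWeakSpace 𝕜 C(X, 𝕜)).injective h'_eq, sub_eq_add_neg]
  exact hh'

end MeanZero

lemma IsFolner.tendsto_expect_dist_of_idempotent {𝕜 ι G : Type*} [RCLike 𝕜] [MetricSpace X]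
    [CompactSpace X] [AddCommSemigroup G] [IsLeftCancelAdd G] [DecidableEq G] {l : Filter ι}
    {F : ι → Finset G} (hF : IsFolner l F) {T : G → C(X, X)}
    (hT : ∀ i j, T (i + j) = (T i).comp (T j)) (hwap : IsWeaklyAlmostPeriodic 𝕜 T) {e : X → X}
    (he : e ∈ ellisSemigroup T) (hee : e ∘ e = e) (x : X) :
    Tendsto (fun i => 𝔼 j ∈ F i, dist (T j x) (T j (e x))) l (𝓝 0) := by
  have e_continuous : Continuous e := hwap.continuous_of_mem_ellisSemigroup he
  let f : C(X, 𝕜) := ⟨fun y => ((dist y (e y) : ℝ) : 𝕜), by fun_prop⟩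
  obtain ⟨h, hh, h_mem⟩ := hwap.exists_mem_weak_closure he f
  have h_zero : h = 0 := by
    ext y
    simp [hh, f, show e (e y) = e y from congrFun hee y]
  have f_mem : f ∈ meanZero 𝕜 l F (fun j => T j x) := by
    simpa [h_zero] using hF.sub_mem_meanZero_of_mem_weak_closure hT h_mem x
  have f_apply (j : G) : f (T j x) = ((dist (T j x) (T j (e x)) : ℝ) : 𝕜) := by
    simp [f, show e (T j x) = T j (e x) from
      congrFun (comp_comm_of_mem_ellisSemigroup hT he j) x]
  rw [← tendsto_ofReal_iff' (𝕜 := 𝕜), RCLike.ofReal_zero]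
  simp only [RCLike.ofReal_expect, ← f_apply]
  exact f_mem

/-- The Besicovitch pseudometric of the maps `T j` for averages over the finite sets `F i` along the
filter `l`. -/
def besicovitchDist {ι G : Type*} [PseudoMetricSpace X] (l : Filter ι) (F : ι → Finset G)
    (T : G → X → X) (x y : X) : ℝ :=
  limsup (fun i => 𝔼 j ∈ F i, dist (T j x) (T j y)) l

lemma besicovitchDist_le_of_tendsto {ι G : Type*} [PseudoMetricSpace X] {l : Filter ι} [l.NeBot]
    {F : ι → Finset G} (hF : ∀ᶠ i in l, (F i).Nonempty) {T : G → X → X} {x y x' y' : X} {ε : ℝ}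
    (hx : Tendsto (fun i => 𝔼 j ∈ F i, dist (T j x) (T j x')) l (𝓝 0))
    (hy : Tendsto (fun i => 𝔼 j ∈ F i, dist (T j y) (T j y')) l (𝓝 0))
    (hxy : ∀ j, dist (T j x') (T j y') ≤ ε) : besicovitchDist l F T x y ≤ ε := by
  have bound_tendsto : Tendsto (fun i => 𝔼 j ∈ F i, dist (T j x) (T j x') + ε +
      𝔼 j ∈ F i, dist (T j y) (T j y')) l (𝓝 ε) := by
    simpa using (hx.add_const ε).add hy
  have le_bound : ∀ᶠ i in l, 𝔼 j ∈ F i, dist (T j x) (T j y) ≤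
      𝔼 j ∈ F i, dist (T j x) (T j x') + ε + 𝔼 j ∈ F i, dist (T j y) (T j y') := by
    filter_upwards [hF] with i hi
    calc 𝔼 j ∈ F i, dist (T j x) (T j y)
        ≤ 𝔼 j ∈ F i, (dist (T j x) (T j x') + ε + dist (T j y) (T j y')) := by
          refine expect_le_expect fun j _ => (dist_triangle4 _ (T j x') (T j y') _).trans ?_
          rw [dist_comm (T j y') (T j y)]
          gcongr
          exact hxy j
      _ = _ := by rw [expect_add_distrib, expect_add_distrib, expect_const hi]
  have nonneg (i : ι) : 0 ≤ 𝔼 j ∈ F i, dist (T j x) (T j y) := expect_nonneg fun _ _ => dist_nonneg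
  calc besicovitchDist l F T x y ≤ limsup _ l := limsup_le_limsup le_bound
        (.of_frequently_ge (.of_forall nonneg)) bound_tendsto.isBoundedUnder_le
    _ = ε := bound_tendsto.limsup_eq

lemma IsWeaklyAlmostPeriodic.exists_idempotent_equicontinuous_comp {𝕜 G : Type*} [RCLike 𝕜]
    [MetricSpace X] [CompactSpace X] [AddCommSemigroup G] [Nonempty G] {T : G → C(X, X)}
    (hT : ∀ i j, T (i + j) = (T i).comp (T j)) (hwap : IsWeaklyAlmostPeriodic 𝕜 T) :
    ∃ e ∈ ellisSemigroup T, e ∘ e = e ∧ Equicontinuous fun j x => T j (e x) := by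
  have hE : IsCompactCommSemigroup (ellisSemigroup T) :=
    isCompactCommSemigroup_ellisSemigroup hT fun _ hp => hwap.continuous_of_mem_ellisSemigroup hp
  obtain ⟨e, he, hee, hmin⟩ := hE.exists_minimal_idempotent
  have mem_ideal (j : G) : T j ∘ e ∈ (e ∘ ·) '' ellisSemigroup T :=
    ⟨T j, subset_closure ⟨j, rfl⟩, comp_comm_of_mem_ellisSemigroup hT he j⟩
  exact ⟨e, he, hee,
    (hE.isCompactCommGroup_image he hee hmin).equicontinuous.comp fun j => ⟨_, mem_ideal j⟩⟩

theorem stmt15_general {𝕜 ι G : Type*} [RCLike 𝕜] [MetricSpace X] [CompactSpace X]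
    [AddCommSemigroup G] [IsLeftCancelAdd G] [DecidableEq G] {l : Filter ι} [l.NeBot]
    {F : ι → Finset G} (hF : IsFolner l F) {T : G → C(X, X)}
    (hT : ∀ i j, T (i + j) = (T i).comp (T j)) (hwap : IsWeaklyAlmostPeriodic 𝕜 T) (x : X) {ε : ℝ}
    (hε : 0 < ε) :
    ∃ δ > 0, ∀ y, dist x y ≤ δ → besicovitchDist l F (fun j => T j) x y < ε := by
  have : Nonempty G := hF.eventually_nonempty.exists.elim fun _ hi => ⟨hi.choose⟩
  obtain ⟨e, he, hee, he_equi⟩ := hwap.exists_idempotent_equicontinuous_comp hT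
  have near_e (y : X) := hF.tendsto_expect_dist_of_idempotent hT hwap he hee y
  obtain ⟨δ, hδ, hxδ⟩ := nhds_basis_closedBall.eventually_iff.1
    (Metric.equicontinuousAt_iff_right.1 (he_equi x) (ε / 2) (half_pos hε))
  refine ⟨δ, hδ, fun y hy => lt_of_le_of_lt ?_ (half_lt_self hε)⟩
  exact besicovitchDist_le_of_tendsto hF.eventually_nonempty (near_e x) (near_e y)
    fun j => (hxδ (mem_closedBall'.2 hy) j).le

lemma map_addLeft_FboxN_inter_FboxN {d : ℕ} (k : Fin d → ℕ) (n : ℕ) :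
    (FboxN d n).map (addLeftEmbedding k) ∩ FboxN d n =
      Fintype.piFinset fun i => Finset.Ico (k i) n := by
  ext j
  simp only [FboxN, mem_inter, Finset.mem_map, Fintype.mem_piFinset, mem_range,
    addLeftEmbedding_apply, mem_Ico]
  constructor
  · rintro ⟨⟨j, -, rfl⟩, hj⟩ i
    exact ⟨Nat.le_add_right _ _, hj i⟩
  · intro hj
    exact ⟨⟨j - k, fun i => (Nat.sub_le _ _).trans_lt (hj i).2,
      add_tsub_cancel_of_le fun i => (hj i).1⟩, fun i => (hj i).2⟩

lemma card_FboxN (d n : ℕ) : (FboxN d n).card = n ^ d := by simp [FboxN]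

lemma card_map_addLeft_FboxN_sdiff_div_card {d n : ℕ} {k : Fin d → ℕ} (hn : 0 < n)
    (hk : ∀ i, k i ≤ n) :
    (((FboxN d n).map (addLeftEmbedding k) \ FboxN d n).card : ℝ) / (FboxN d n).card =
      1 - ∏ i, (1 - (k i : ℝ) / n) := by
  have card_inter : (((FboxN d n).map (addLeftEmbedding k) ∩ FboxN d n).card : ℝ) =
      ∏ i, ((n : ℝ) - k i) := by
    simp [map_addLeft_FboxN_inter_FboxN, Nat.cast_sub (hk _)]
  have card_split : (((FboxN d n).map (addLeftEmbedding k) \ FboxN d n).card : ℝ) =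
      n ^ d - ∏ i, ((n : ℝ) - k i) := by
    rw [eq_sub_iff_add_eq, ← card_inter]
    exact_mod_cast (card_sdiff_add_card_inter _ _).trans (by rw [card_map, card_FboxN])
  have factor (i : Fin d) : 1 - (k i : ℝ) / n = ((n : ℝ) - k i) / n := by field_simp
  have pow_ne_zero : (n : ℝ) ^ d ≠ 0 := by positivity
  simp only [factor, prod_div_distrib, prod_const, card_univ, Fintype.card_fin]
  rw [card_split, card_FboxN, Nat.cast_pow, sub_div, div_self pow_ne_zero]

lemma isFolner_FboxN (d : ℕ) : IsFolner atTop (FboxN d) where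
  eventually_nonempty := by
    filter_upwards [eventually_gt_atTop 0] with n hn
    exact card_pos.1 (by rw [card_FboxN]; positivity)
  tendsto_card_sdiff k := by
    have factor_tendsto (i : Fin d) : Tendsto (fun n : ℕ => 1 - (k i : ℝ) / n) atTop (𝓝 1) := by
      simpa using (tendsto_const_div_atTop_nhds_zero_nat (k i : ℝ)).const_sub 1
    have limit : Tendsto (fun n : ℕ => 1 - ∏ i, (1 - (k i : ℝ) / n)) atTop (𝓝 0) := by
      simpa using (tendsto_finsetProd univ fun i _ => factor_tendsto i).const_sub 1
    refine limit.congr' ?_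
    filter_upwards [eventually_gt_atTop 0, eventually_all.2 fun i => eventually_ge_atTop (k i)]
      with n hn hk
    exact (card_map_addLeft_FboxN_sdiff_div_card hn hk).symm

lemma dBN_eq_besicovitchDist {d : ℕ} [PseudoMetricSpace X] (T : (Fin d → ℕ) → X → X) (x y : X) :
    dBN T x y = besicovitchDist atTop (FboxN d) T x y := by
  simp only [dBN, besicovitchDist, expect_eq_sum_div_card]

/-- a transitive weakly almost periodic TDS (given by a continuous
`ℕ^d`-action on a compact metric space) is mean equicontinuous. -/
theorem stmt15 {d : ℕ}
    [MetricSpace X] [CompactSpace X]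
    (T : (Fin d → ℕ) → X → X)
    (hTc : ∀ j, Continuous (T j))
    (hTadd : ∀ i j, T (i + j) = T i ∘ T j)
    (htrans : {x : X | Dense (Set.range fun j : Fin d → ℕ => T j x)} ∈ residual X)
    (hwap : ∀ f : C(X, ℂ), IsCompact (closure (Set.range fun j : Fin d → ℕ =>
      toWeakSpace ℂ C(X, ℂ) (f.comp (ContinuousMap.mk (T j) (hTc j)))))) :
    ∀ x : X, ∀ ε : ℝ, 0 < ε → ∃ δ : ℝ, 0 < δ ∧
      ∀ y : X, dist x y ≤ δ → dBN T x y < ε := by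
  intro x ε hε
  simp only [dBN_eq_besicovitchDist]
  exact stmt15_general (T := fun j => ⟨T j, hTc j⟩) (isFolner_FboxN d)
    (fun i j => ContinuousMap.coe_injective (hTadd i j)) hwap x hε
end
end
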